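/- arXiv:2209.00986 — 2 statements merged into one kernel-verified Lean document; each statement's English description precedes it below -/
import Mathlib

section
/- Let G be a finite group and let H, K ≤ G be conjugate subgroups of index n in G with H not normal in G. Then (n-1)!/(n-1)^{n-1} ≤ P_G(H,K) ≤ 1/2. -/
/-!
Let `K` act on `G ⧸ H` by left multiplication; the orbit of `gH` consists of the left cosets of `H`
inside the double coset `KgH`. If the orbit has size `d`, then `KgH` is also the union of `d` right
cosets of `K`, and each of the `d` left cosets meets each of the `d` right cosets in `|K| / d`
elements: by translation by `K` it suffices to look at `gH ∩ Kg`, which is `K_{gH} g` with `K_{gH}`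
the stabilizer of `gH`. A common transversal therefore consists of, for each orbit, one of the `d!`
matchings of left with right cosets and one element of each of the `d` matched intersections, so
that `P_G(H, K) = ∏ d! / d ^ d` over the orbits.

Put `f d = d! / d ^ d`. Comparing `(x + y) ^ (x + y)` with a single term of its binomial expansion
gives `f (x + y) ≤ f x * f y`. If `K = gHg⁻¹`, then `gH` is a fixed point of `K` and contributes
`f 1 = 1`; the other orbit sizes sum to `n - 1`, so they contribute at least `f (n - 1)`. If `H` is
not normal, some left coset is moved by `K`, and its orbit contributes at most `f 2 = 1 / 2`.
-/

open scoped Pointwise Classical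

/-- `T` is simultaneously a left transversal for `H` (each left coset `gH` contains exactly one
element of `T`) and a right transversal for `K` (each right coset `Kg` contains exactly one
element of `T`). -/
def IsDoubleTransversal {G : Type*} [Group G] (H K : Subgroup G) (T : Set G) : Prop :=
  (∀ g : G, ∃! t : G, t ∈ T ∧ g⁻¹ * t ∈ H) ∧ (∀ g : G, ∃! t : G, t ∈ T ∧ t * g⁻¹ ∈ K)

/-- `|DT_G(H,K)|`: the number of common transversals for the pair `(H, K)`. -/
noncomputable def numDT {G : Type*} [Group G] (H K : Subgroup G) : ℕ :=
  Nat.card {T : Set G // IsDoubleTransversal H K T}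

/-- `P_G(H,K) = |DT_G(H,K)| / |H| ^ (G:H)`, the common transversal probability. -/
noncomputable def transProb {G : Type*} [Group G] (H K : Subgroup G) : ℚ :=
  (numDT H K : ℚ) / (Nat.card H : ℚ) ^ H.index

/-- `tp(G)`: the minimum of `P_G(H) = P_G(H,H)` over all subgroups `H ≤ G`. -/
noncomputable def tp (G : Type*) [Group G] [Finite G] : ℚ :=
  haveI : Finite (Subgroup G) :=
    Finite.of_injective (fun H : Subgroup G => (H : Set G)) SetLike.coe_injective
  haveI : Fintype (Subgroup G) := Fintype.ofFinite _
  Finset.univ.inf' Finset.univ_nonempty (fun H : Subgroup G => transProb H H)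

section BijProb

/-- The probability `d! / d ^ d` that a uniformly random self-map of a `d`-element set is a
bijection. It is the factor of `P_G(H, K)` coming from a `K`-orbit of size `d` on `G ⧸ H`.
At `d = 0` it is `1`, since `0 ^ 0 = 1`. -/
def bijProb (d : ℕ) : ℚ := (d.factorial : ℚ) / (d : ℚ) ^ d

lemma bijProb_one : bijProb 1 = 1 := by norm_num [bijProb]

lemma bijProb_two : bijProb 2 = 1 / 2 := by norm_num [bijProb]

lemma cast_pow_self_pos (d : ℕ) : (0 : ℚ) < (d : ℚ) ^ d := by exact_mod_cast Nat.pow_self_pos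

lemma bijProb_nonneg (d : ℕ) : 0 ≤ bijProb d := by unfold bijProb; positivity

lemma bijProb_le_one (d : ℕ) : bijProb d ≤ 1 :=
  div_le_one_of_le₀ (mod_cast d.factorial_le_pow) (cast_pow_self_pos d).le

lemma choose_mul_pow_mul_pow_le_add_pow {R : Type*} [CommSemiring R] [PartialOrder R]
    [IsOrderedRing R] {a b : R} (ha : 0 ≤ a) (hb : 0 ≤ b) (x y : ℕ) :
    ((x + y).choose x : R) * (a ^ x * b ^ y) ≤ (a + b) ^ (x + y) := by
  have hterm := Finset.single_le_sum
    (f := fun m => a ^ m * b ^ (x + y - m) * ((x + y).choose m : R))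
    (fun m _ => by positivity) (Finset.mem_range.2 (by lia : x < x + y + 1))
  rwa [← add_pow, Nat.add_sub_cancel_left, mul_comm] at hterm

lemma bijProb_add_le (x y : ℕ) : bijProb (x + y) ≤ bijProb x * bijProb y := by
  have hbinom := choose_mul_pow_mul_pow_le_add_pow (R := ℚ) x.cast_nonneg y.cast_nonneg x y
  have hx := cast_pow_self_pos x
  have hy := cast_pow_self_pos y
  have hxy := cast_pow_self_pos (x + y)
  rw [Nat.cast_add_choose, div_mul_eq_mul_div, div_le_iff₀ (by positivity)] at hbinom
  rw [bijProb, bijProb, bijProb, div_mul_div_comm, div_le_div_iff₀ hxy (mul_pos hx hy),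
    mul_comm (_ * _) (_ ^ _)]
  exact_mod_cast hbinom

lemma bijProb_le_half {d : ℕ} (hd : 2 ≤ d) : bijProb d ≤ 1 / 2 := by
  obtain ⟨e, rfl⟩ := Nat.exists_eq_add_of_le hd
  calc bijProb (2 + e) ≤ bijProb 2 * bijProb e := bijProb_add_le 2 e
    _ ≤ bijProb 2 := mul_le_of_le_one_right (bijProb_nonneg 2) (bijProb_le_one e)
    _ = 1 / 2 := bijProb_two

lemma bijProb_sum_le_prod {ι : Type*} (s : Finset ι) (d : ι → ℕ) :
    bijProb (∑ i ∈ s, d i) ≤ ∏ i ∈ s, bijProb (d i) := by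
  induction s using Finset.induction_on with
  | empty => simp [bijProb]
  | insert i s hi ih =>
    rw [Finset.sum_insert hi, Finset.prod_insert hi]
    exact (bijProb_add_le _ _).trans (mul_le_mul_of_nonneg_left ih (bijProb_nonneg _))

lemma bijProb_sum_sub_one_le_prod {ι : Type*} {s : Finset ι} {d : ι → ℕ} {i : ι} (hi : i ∈ s)
    (hd : d i = 1) : bijProb (∑ j ∈ s, d j - 1) ≤ ∏ j ∈ s, bijProb (d j) := by
  rw [← Finset.add_sum_erase s d hi, ← Finset.mul_prod_erase s _ hi]
  simpa [hd, bijProb_one] using bijProb_sum_le_prod (s.erase i) d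

lemma prod_bijProb_le_half {ι : Type*} {s : Finset ι} {d : ι → ℕ} {i : ι} (hi : i ∈ s)
    (hd : 2 ≤ d i) : ∏ j ∈ s, bijProb (d j) ≤ 1 / 2 := by
  have hrest : ∏ j ∈ s.erase i, bijProb (d j) ≤ 1 :=
    Finset.prod_le_one (fun _ _ => bijProb_nonneg _) fun _ _ => bijProb_le_one _
  calc ∏ j ∈ s, bijProb (d j) = bijProb (d i) * ∏ j ∈ s.erase i, bijProb (d j) :=
        (Finset.mul_prod_erase s _ hi).symm
    _ ≤ bijProb (d i) := mul_le_of_le_one_right (bijProb_nonneg _) hrest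
    _ ≤ 1 / 2 := bijProb_le_half hd

end BijProb

section CommonTransversals

variable {X A B D : Type*}

lemma bijOn_univ_iff_existsUnique {f : X → A} {T : Set X} :
    Set.BijOn f T Set.univ ↔ ∀ u, ∃! t, t ∈ T ∧ f t = u := by
  constructor
  · rintro hf u
    obtain ⟨t, ht, rfl⟩ := hf.surjOn (Set.mem_univ u)
    exact ⟨t, ⟨ht, rfl⟩, fun t' ht' => hf.injOn ht'.1 ht ht'.2⟩
  · intro hf
    exact ⟨Set.mapsTo_univ f T,
      fun t ht t' ht' htt' => (hf (f t')).unique ⟨ht, htt'⟩ ⟨ht', rfl⟩,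
      fun u _ => (hf u).exists⟩

/-- The common transversals of the fibres of `a` and of the fibres of `b`, a transversal of the
fibres of a map being encoded as a set which the map sends bijectively onto its codomain. -/
def commonTransversals (a : X → A) (b : X → B) : Set (Set X) :=
  {T | Set.BijOn a T Set.univ ∧ Set.BijOn b T Set.univ}

lemma bijOn_range_iff {b : X → B} {s : A → X} (hs : Function.Injective s) :
    Set.BijOn b (Set.range s) Set.univ ↔ Function.Bijective (b ∘ s) := by
  rw [← Set.image_univ, ← Set.bijOn_comp_iff hs.injOn, Set.bijOn_univ]

lemma eq_of_range_eq_of_leftInverse {a : X → A} {s s' : A → X} (hs : Function.LeftInverse a s)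
    (hs' : Function.LeftInverse a s') (h : Set.range s = Set.range s') : s = s' := by
  funext u
  obtain ⟨u', hu'⟩ : s u ∈ Set.range s' := h ▸ Set.mem_range_self u
  obtain rfl : u' = u := by rw [← hs' u', hu', hs u]
  exact hu'.symm

lemma exists_leftInverse_range_eq {a : X → A} {T : Set X} (ha : Set.BijOn a T Set.univ) :
    ∃ s : A → X, Function.LeftInverse a s ∧ Set.range s = T := by
  choose s hsT hs using fun u => ha.surjOn (Set.mem_univ u)
  refine ⟨s, hs, Set.Subset.antisymm (Set.range_subset_iff.2 hsT) fun t ht => ⟨a t, ?_⟩⟩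
  exact ha.injOn (hsT _) ht (hs _)

/-- Common transversals of the fibres of `a` and `b`, encoded as the sections `s` of `a` for which
`b ∘ s` is a bijection; the transversal is the range of `s`. -/
noncomputable def sectionEquivCommonTransversal (a : X → A) (b : X → B) :
    {s : A → X // Function.LeftInverse a s ∧ Function.Bijective (b ∘ s)} ≃
      commonTransversals a b :=
  Equiv.ofBijective
    (fun s => ⟨Set.range s.1,
      (bijOn_range_iff s.2.1.injective).2 (s.2.1.comp_eq_id ▸ Function.bijective_id),
      (bijOn_range_iff s.2.1.injective).2 s.2.2⟩) <| by
    constructor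
    · intro s s' h
      exact Subtype.ext (eq_of_range_eq_of_leftInverse s.2.1 s'.2.1 (congrArg Subtype.val h))
    · rintro ⟨T, ha, hb⟩
      obtain ⟨s, hs, rfl⟩ := exists_leftInverse_range_eq ha
      exact ⟨⟨s, hs, (bijOn_range_iff hs.injective).1 hb⟩, rfl⟩

/-- A section `s` of `a` with `b ∘ s` bijective, recorded together with the matching `b ∘ s` of
fibres of `a` with fibres of `b`. -/
noncomputable def sectionEquivMatching (a : X → A) (b : X → B) :
    {s : A → X // Function.LeftInverse a s ∧ Function.Bijective (b ∘ s)} ≃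
      {w : (A ≃ B) × (A → X) // ∀ u, a (w.2 u) = u ∧ b (w.2 u) = w.1 u} where
  toFun s := ⟨(Equiv.ofBijective _ s.2.2, s.1), fun u => ⟨s.2.1 u, rfl⟩⟩
  invFun w := ⟨w.1.2, fun u => (w.2 u).1, by
    rw [show b ∘ w.1.2 = w.1.1 from funext fun u => (w.2 u).2]
    exact w.1.1.bijective⟩
  left_inv _ := rfl
  right_inv w := Subtype.ext (Prod.ext (Equiv.ext fun u => (w.2 u).2) rfl)

-- The right-hand side is the permanent of the matrix of intersection numbers of the fibres.
lemma card_commonTransversals_eq_sum [Finite X] [Fintype A] [Fintype B] (a : X → A) (b : X → B) :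
    Nat.card (commonTransversals a b) =
      ∑ σ : A ≃ B, ∏ u, Nat.card {x // a x = u ∧ b x = σ u} := by
  have e := (sectionEquivCommonTransversal a b).symm.trans <| (sectionEquivMatching a b).trans <|
    (Equiv.subtypeProdEquivSigmaSubtype
      fun (σ : A ≃ B) (s : A → X) => ∀ u, a (s u) = u ∧ b (s u) = σ u).trans <|
    Equiv.sigmaCongrRight fun σ => Equiv.subtypePiEquivPi (p := fun u x => a x = u ∧ b x = σ u)
  rw [Nat.card_congr e, Nat.card_sigma]
  exact Finset.sum_congr rfl fun σ _ => Nat.card_pi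

lemma card_commonTransversals_of_ite {R : Type*} [CommSemiring R] [Finite X] [Fintype A]
    [Finite B] [DecidableEq D] {a : X → A} {b : X → B} {p : A → D} {q : B → D} {w : A → R}
    (hab : ∀ u v, (Nat.card {x // a x = u ∧ b x = v} : R) = if q v = p u then w u else 0) :
    (Nat.card (commonTransversals a b) : R) =
      Nat.card {σ : A ≃ B // q ∘ σ = p} * ∏ u, w u := by
  have := Fintype.ofFinite B
  simp_rw [card_commonTransversals_eq_sum, Nat.cast_sum, Nat.cast_prod, hab, Fintype.prod_ite_zero,
    ← Finset.sum_filter, Finset.sum_const, nsmul_eq_mul, Nat.card_eq_fintype_card,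
    Fintype.card_subtype, funext_iff, Function.comp_apply]

lemma exists_equiv_comp_eq [Finite A] [Finite B] {p : A → D} {q : B → D}
    (hpq : ∀ δ, Nat.card {u // p u = δ} = Nat.card {v // q v = δ}) : ∃ σ : A ≃ B, q ∘ σ = p :=
  ⟨Equiv.ofFiberEquiv fun δ => (Finite.card_eq.1 (hpq δ)).some, funext (Equiv.ofFiberEquiv_map _)⟩

lemma card_equiv_comp_eq [Finite A] [Finite B] [Fintype D] {p : A → D} {q : B → D}
    (hpq : ∀ δ, Nat.card {u // p u = δ} = Nat.card {v // q v = δ}) :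
    Nat.card {σ : A ≃ B // q ∘ σ = p} = ∏ δ, (Nat.card {u // p u = δ}).factorial := by
  obtain ⟨σ₀, rfl⟩ := exists_equiv_comp_eq hpq
  have e : {σ : A ≃ B // q ∘ σ = q ∘ σ₀} ≃ {τ : Equiv.Perm B // q ∘ τ = q} :=
    (Equiv.equivCongr σ₀ (Equiv.refl B)).subtypeEquiv fun σ => by
      simp [funext_iff, σ₀.symm.forall_congr_left]
  simp_rw [hpq]
  exact (Nat.card_congr e).trans (DomMulAct.stabilizer_ncard q)

lemma card_fiber_eq_sum_card_inter [Finite X] [Fintype B] (a : X → A) (b : X → B) (u : A) :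
    Nat.card {x // a x = u} = ∑ v, Nat.card {x // a x = u ∧ b x = v} := by
  rw [← Nat.card_congr (Equiv.sigmaFiberEquiv fun x : {x // a x = u} => b x), Nat.card_sigma]
  exact Finset.sum_congr rfl fun v _ =>
    Nat.card_congr (Equiv.subtypeSubtypeEquivSubtypeInter (a · = u) (b · = v))

lemma prod_comp_eq_prod_pow_card_fiber {M : Type*} [CommMonoid M] [Fintype A] [Fintype D]
    (p : A → D) (f : D → M) : ∏ u, f (p u) = ∏ δ, f δ ^ Nat.card {u // p u = δ} := by
  simp [← Fintype.prod_fiberwise' p f]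

lemma card_fiber_eq_card_fiber [Finite X] [Finite B] [DecidableEq D] {a : X → A} {b : X → B}
    {p : A → D} {q : B → D} {h : ℕ} (hh : h ≠ 0) (ha : ∀ u, Nat.card {x // a x = u} = h)
    (hab : ∀ u v, (Nat.card {x // a x = u ∧ b x = v} : ℚ) =
      if q v = p u then (h : ℚ) / Nat.card {u' // p u' = p u} else 0) (u : A) :
    Nat.card {u' // p u' = p u} = Nat.card {v // q v = p u} := by
  have := Fintype.ofFinite B
  have hsum := congrArg (Nat.cast (R := ℚ)) (card_fiber_eq_sum_card_inter a b u)
  simp only [ha, Nat.cast_sum, hab, ← Finset.sum_filter, Finset.sum_const, nsmul_eq_mul,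
    ← Fintype.card_subtype, ← Nat.card_eq_fintype_card] at hsum
  have hd : (Nat.card {u' // p u' = p u} : ℚ) ≠ 0 := by
    intro h0
    simp [h0, hh] at hsum
  field_simp at hsum
  exact_mod_cast hsum

theorem card_commonTransversals_div [Finite X] [Finite A] [Finite B] [Fintype D]
    [DecidableEq D] {a : X → A} {b : X → B} {p : A → D} {q : B → D} {h : ℕ} (hh : h ≠ 0)
    (hp : Function.Surjective p) (ha : ∀ u, Nat.card {x // a x = u} = h)
    (hab : ∀ u v, (Nat.card {x // a x = u ∧ b x = v} : ℚ) =
      if q v = p u then (h : ℚ) / Nat.card {u' // p u' = p u} else 0) :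
    (Nat.card (commonTransversals a b) : ℚ) / h ^ Nat.card A =
      ∏ δ, bijProb (Nat.card {u // p u = δ}) := by
  have := Fintype.ofFinite A
  have hpq : ∀ δ, Nat.card {u // p u = δ} = Nat.card {v // q v = δ} :=
    hp.forall.2 (card_fiber_eq_card_fiber hh ha hab)
  have hh' : (h : ℚ) ≠ 0 := Nat.cast_ne_zero.2 hh
  rw [card_commonTransversals_of_ite hab, card_equiv_comp_eq hpq, Finset.prod_div_distrib,
    Finset.prod_const, Finset.card_univ, ← Nat.card_eq_fintype_card,
    prod_comp_eq_prod_pow_card_fiber p fun δ => (Nat.card {u // p u = δ} : ℚ),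
    mul_div_assoc, div_div_cancel_left' (pow_ne_zero _ hh'), ← div_eq_mul_inv, Nat.cast_prod,
    ← Finset.prod_div_distrib]
  rfl

end CommonTransversals

section Cosets

open MulAction QuotientGroup

variable {G : Type*} [Group G] (H K : Subgroup G)

/-- The map `K \ G → K \ (G / H)` sending the right coset `Kg` to the `K`-orbit of the left coset
`gH`. The `K`-orbits on `G ⧸ H` encode the double cosets `KgH`, so this sends a right coset of `K`
to the double coset containing it. -/
def rightCosetOrbit : Quotient (rightRel K) → orbitRel.Quotient K (G ⧸ H) :=
  Quotient.map (fun g : G => (g : G ⧸ H)) fun x y (hxy : x ∈ orbit K y) => by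
    obtain ⟨k, rfl⟩ := hxy
    exact ⟨k, rfl⟩

variable {H K}

lemma isDoubleTransversal_iff {T : Set G} : IsDoubleTransversal H K T ↔
    T ∈ commonTransversals (fun g : G => (g : G ⧸ H)) (Quotient.mk (rightRel K)) := by
  rw [commonTransversals, Set.mem_ofPred_eq, bijOn_univ_iff_existsUnique,
    bijOn_univ_iff_existsUnique, mk_surjective.forall, Quotient.mk_surjective.forall]
  refine and_congr (forall_congr' fun g => existsUnique_congr fun t => and_congr_right' ?_)
    (forall_congr' fun g => existsUnique_congr fun t => and_congr_right' ?_)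
  · rw [eq_comm, QuotientGroup.eq]
  · rw [eq_comm, Quotient.eq, rightRel_apply]

lemma card_mk_eq (u : G ⧸ H) : Nat.card {g : G // (g : G ⧸ H) = u} = Nat.card H :=
  (card_preimage_mk H {u}).trans (by simp)

lemma card_leftCoset_inter_rightCoset (g : G) :
    Nat.card {x : G // (x : G ⧸ H) = g ∧ Quotient.mk (rightRel K) x = Quotient.mk _ g} =
      Nat.card (stabilizer K (g : G ⧸ H)) := by
  refine (Nat.card_congr <| Equiv.ofBijective
    (fun k : stabilizer K (g : G ⧸ H) => ⟨k.1 * g, k.2, Quotient.sound ⟨k.1, rfl⟩⟩) ⟨?_, ?_⟩).symm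
  · intro k l hkl
    exact Subtype.ext (Subtype.ext (mul_right_cancel (congrArg Subtype.val hkl)))
  · rintro ⟨x, hx, hxg⟩
    obtain ⟨k, rfl⟩ : x ∈ orbit K g := Quotient.exact hxg
    exact ⟨⟨k, hx⟩, rfl⟩

lemma exists_mem_leftCoset_rightCoset {u : G ⧸ H} {v : Quotient (rightRel K)}
    (huv : rightCosetOrbit H K v = Quotient.mk _ u) :
    ∃ g : G, (g : G ⧸ H) = u ∧ Quotient.mk _ g = v := by
  obtain ⟨g, rfl⟩ := Quotient.exists_rep v
  obtain ⟨k, rfl⟩ : u ∈ orbit K (g : G ⧸ H) := Quotient.exact huv.symm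
  exact ⟨k * g, rfl, Quotient.sound ⟨k, rfl⟩⟩

lemma mk_mem_fixedPoints_iff_le_conj {g : G} :
    (g : G ⧸ H) ∈ fixedPoints K (G ⧸ H) ↔ K ≤ MulAut.conj g • H := by
  simp_rw [mem_fixedPoints, SetLike.le_def, Subgroup.mem_pointwise_smul_iff_inv_smul_mem,
    Subtype.forall]
  refine forall₂_congr fun k hk => eq_comm.trans (QuotientGroup.eq.trans ?_)
  simp [← map_inv, mul_assoc]

lemma card_orbit_mk_le_one_iff [Finite (G ⧸ H)] {g : G} :
    Nat.card (orbit K (g : G ⧸ H)) ≤ 1 ↔ K ≤ MulAut.conj g • H := by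
  rw [Finite.card_le_one_iff_subsingleton, Set.subsingleton_coe,
    subsingleton_orbit_iff_mem_fixedPoints, mk_mem_fixedPoints_iff_le_conj]

lemma card_stabilizer_mul_card_fiber (u : G ⧸ H) :
    Nat.card (stabilizer K u) *
      Nat.card {u' // Quotient.mk (orbitRel K (G ⧸ H)) u' = Quotient.mk _ u} = Nat.card K := by
  have hfiber : {u' | Quotient.mk (orbitRel K (G ⧸ H)) u' = Quotient.mk _ u} = orbit K u :=
    Set.ext fun u' => Quotient.eq.trans orbitRel_apply
  rw [← Subgroup.card_mul_index (stabilizer K u), index_stabilizer, ← hfiber]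
  rfl

lemma card_inter_eq_ite [Finite G] (u : G ⧸ H) (v : Quotient (rightRel K)) :
    (Nat.card {x : G // (x : G ⧸ H) = u ∧ Quotient.mk _ x = v} : ℚ) =
      if rightCosetOrbit H K v = Quotient.mk _ u then (Nat.card K : ℚ) /
        Nat.card {u' // Quotient.mk (orbitRel K (G ⧸ H)) u' = Quotient.mk _ u}
      else 0 := by
  split_ifs with huv
  · obtain ⟨g, rfl, rfl⟩ := exists_mem_leftCoset_rightCoset huv
    have hmul := card_stabilizer_mul_card_fiber (K := K) (g : G ⧸ H)
    rw [card_leftCoset_inter_rightCoset, eq_div_iff, ← hmul, Nat.cast_mul]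
    exact_mod_cast right_ne_zero_of_mul (hmul.trans_ne Nat.card_pos.ne')
  · have : IsEmpty {x : G // (x : G ⧸ H) = u ∧ Quotient.mk _ x = v} :=
      ⟨fun ⟨x, hxu, hxv⟩ => huv (by rw [← hxu, ← hxv]; rfl)⟩
    simp

variable (H K)

theorem transProb_eq_prod [Finite G] [Fintype (orbitRel.Quotient K (G ⧸ H))]
    (hcard : Nat.card H = Nat.card K) :
    transProb H K = ∏ ω : orbitRel.Quotient K (G ⧸ H), bijProb (Nat.card ω.orbit) := by
  have hprod := card_commonTransversals_div (Nat.card_pos (α := K)).ne' Quotient.mk_surjective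
    (fun u : G ⧸ H => (card_mk_eq u).trans hcard) (card_inter_eq_ite (K := K))
  rw [transProb, numDT, hcard, Subgroup.index,
    Nat.card_congr (Equiv.subtypeEquivRight fun T => isDoubleTransversal_iff)]
  refine hprod.trans (Finset.prod_congr rfl fun ω _ => ?_)
  rw [Nat.card_congr (Equiv.subtypeEquivRight fun u => orbitRel.Quotient.mem_orbit.symm)]

lemma sum_card_orbit [Finite (G ⧸ H)] [Fintype (orbitRel.Quotient K (G ⧸ H))] :
    ∑ ω : orbitRel.Quotient K (G ⧸ H), Nat.card ω.orbit = H.index := by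
  rw [Subgroup.index, Nat.card_congr (selfEquivSigmaOrbits' K (G ⧸ H)), Nat.card_sigma]

variable {H K}

lemma bijProb_index_sub_one_le_transProb [Finite G] (hcard : Nat.card H = Nat.card K) {g : G}
    (hg : K ≤ MulAut.conj g • H) : bijProb (H.index - 1) ≤ transProb H K := by
  have := Fintype.ofFinite (orbitRel.Quotient K (G ⧸ H))
  rw [transProb_eq_prod H K hcard, ← sum_card_orbit H K]
  refine bijProb_sum_sub_one_le_prod (Finset.mem_univ (Quotient.mk'' (g : G ⧸ H))) ?_
  have := (nonempty_orbit (M := K) (g : G ⧸ H)).to_subtype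
  exact (card_orbit_mk_le_one_iff.2 hg).antisymm Nat.card_pos

lemma transProb_le_half [Finite G] (hcard : Nat.card H = Nat.card K)
    (hHK : H = K → ¬ H.Normal) : transProb H K ≤ 1 / 2 := by
  have := Fintype.ofFinite (orbitRel.Quotient K (G ⧸ H))
  obtain ⟨g, hg⟩ : ∃ g : G, ¬ K ≤ MulAut.conj g • H := by
    by_contra! hfix
    have hconj (g : G) : K = MulAut.conj g • H :=
      Subgroup.eq_of_le_of_card_ge (hfix g)
        (hcard ▸ Nat.card_congr (Subgroup.equivSMul (MulAut.conj g) H).symm.toEquiv).le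
    have hKH : K = H := by simpa using hconj 1
    exact hHK hKH.symm (.of_conjugate_fixed fun g => (hconj g).symm.trans hKH)
  rw [transProb_eq_prod H K hcard]
  refine prod_bijProb_le_half (Finset.mem_univ (Quotient.mk'' (g : G ⧸ H))) ?_
  exact not_le.1 (card_orbit_mk_le_one_iff.not.2 hg)

end Cosets

theorem stmt7_general {G : Type*} [Group G] [Finite G] (H K : Subgroup G) (n : ℕ)
    (hH : H.index = n) (hK : K.index = n) :
    ((∃ g : G, MulAut.conj g • H = K) →
      ((n - 1).factorial : ℚ) / ((n - 1 : ℕ) : ℚ) ^ (n - 1) ≤ transProb H K) ∧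
    ((H = K → ¬ H.Normal) → transProb H K ≤ 1 / 2) := by
  have hcard : Nat.card H = Nat.card K := by
    refine mul_right_cancel₀ (H.index_ne_zero_of_finite) ?_
    rw [H.card_mul_index, hH, ← hK, K.card_mul_index]
  subst hH
  exact ⟨fun ⟨g, hg⟩ => bijProb_index_sub_one_le_transProb hcard hg.ge, transProb_le_half hcard⟩

theorem stmt7 {G : Type*} [Group G] [Finite G] (H K : Subgroup G) (n : ℕ)
    (hH : H.index = n) (hK : K.index = n)
    (hconj : ∃ g : G, MulAut.conj g • H = K) (hnn : ¬ H.Normal) :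
    ((n - 1).factorial : ℚ) / ((n - 1 : ℕ) : ℚ) ^ (n - 1) ≤ transProb H K ∧
      transProb H K ≤ 1 / 2 :=
  (stmt7_general H K n hH hK).imp (· hconj) (· fun _ => hnn)
end

section
/- Let G be a finite group. Then: (i) for every subgroup H ≤ G, tp(G) ≤ tp(H); (ii) for every normal subgroup N ⊴ G, tp(G) ≤ tp(G/N); (iii) for every section X of G (i.e. X ≅ H/N with N ⊴ H ≤ G), tp(G) ≤ tp(X). -/
open scoped Pointwise Classical

/-!
A common transversal `T` of `K` is determined by its representative of each left coset of `K`, and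
both inequalities bound the number of choices for these representatives.

If `f : H →* G` is injective and `K ≤ H`, then `f ⁻¹' T` is a common transversal of `K` for every
common transversal `T` of `f K`, and it prescribes the representatives of the cosets meeting `f H`.
Each of the other `(G : f K) - (H : K)` representatives can be chosen in at most `|K|` ways, which
gives `P_G(f K) ≤ P_H(K)`.

If `f : G →* X` is surjective with kernel `N` and `K ≤ X`, then `f '' T` is a common transversal of
`K` for every common transversal `T` of `f⁻¹ K`, and it prescribes each representative modulo `N`.
Hence there are at most `|N| ^ (X : K)` choices of `T` for a given image, and `|f⁻¹ K| = |K| |N|`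
gives `P_G(f⁻¹ K) ≤ P_X(K)`.
-/

namespace IsDoubleTransversal

variable {G H X : Type*} [Group G] [Group H] [Group X]

section Rep

variable {K L : Subgroup G} {S T : Set G}

theorem isComplement (hT : IsDoubleTransversal K L T) : Subgroup.IsComplement T (K : Set G) := by
  refine Subgroup.isComplement_iff_existsUnique_inv_mul_mem.2 fun g => ?_
  obtain ⟨t, ⟨htT, htK⟩, huniq⟩ := hT.1 g
  refine ⟨⟨t, htT⟩, by simpa using K.inv_mem htK, fun s hs => Subtype.ext (huniq s ⟨s.2, ?_⟩)⟩
  simpa using K.inv_mem hs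

/-- The unique element of the common transversal `T` that lies in the left coset `q`. -/
noncomputable def rep (hT : IsDoubleTransversal K L T) (q : G ⧸ K) : G :=
  hT.isComplement.leftQuotientEquiv q

theorem rep_mem (hT : IsDoubleTransversal K L T) (q : G ⧸ K) : hT.rep q ∈ T :=
  (hT.isComplement.leftQuotientEquiv q).2

theorem mk_rep (hT : IsDoubleTransversal K L T) (q : G ⧸ K) : (hT.rep q : G ⧸ K) = q :=
  hT.isComplement.quotientGroupMk_leftQuotientEquiv q

theorem rep_mk (hT : IsDoubleTransversal K L T) {t : G} (ht : t ∈ T) : hT.rep t = t :=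
  congrArg Subtype.val (hT.isComplement.leftQuotientEquiv.apply_symm_apply ⟨t, ht⟩)

theorem range_rep (hT : IsDoubleTransversal K L T) : Set.range hT.rep = T :=
  (Set.range_subset_iff.2 hT.rep_mem).antisymm fun t ht => ⟨t, hT.rep_mk ht⟩

theorem eq_of_rep_eq (hS : IsDoubleTransversal K L S) (hT : IsDoubleTransversal K L T)
    (h : ∀ q, hS.rep q = hT.rep q) : S = T := by
  rw [← hS.range_rep, funext h, hT.range_rep]

theorem inv_out_mul_rep_mem (hT : IsDoubleTransversal K L T) (q : G ⧸ K) :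
    q.out⁻¹ * hT.rep q ∈ K := by
  rw [← QuotientGroup.eq, QuotientGroup.out_eq', hT.mk_rep]

end Rep

section Preimage

variable {f : H →* G} {K L : Subgroup H} {S T : Set G}

theorem preimage (hf : Function.Injective f) (hT : IsDoubleTransversal (K.map f) (L.map f) T) :
    IsDoubleTransversal K L (f ⁻¹' T) := by
  constructor
  · intro g
    obtain ⟨t, ⟨htT, k, hk, hkt⟩, huniq⟩ := hT.1 (f g)
    obtain rfl : f (g * k) = t := by rw [map_mul, hkt, mul_inv_cancel_left]
    refine ⟨g * k, ⟨htT, by simpa using hk⟩, fun s ⟨hsT, hsK⟩ => hf (huniq _ ⟨hsT, _, hsK, ?_⟩)⟩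
    simp
  · intro g
    obtain ⟨t, ⟨htT, l, hl, hlt⟩, huniq⟩ := hT.2 (f g)
    obtain rfl : f (l * g) = t := by rw [map_mul, hlt, inv_mul_cancel_right]
    refine ⟨l * g, ⟨htT, by simpa using hl⟩, fun s ⟨hsT, hsL⟩ => hf (huniq _ ⟨hsT, _, hsL, ?_⟩)⟩
    simp

theorem rep_map (hf : Function.Injective f) (hT : IsDoubleTransversal (K.map f) (L.map f) T)
    (h : H) : hT.rep (f h : G ⧸ K.map f) = f ((hT.preimage hf).rep (h : H ⧸ K)) := by
  have hmk : (f h : G ⧸ K.map f) = f ((hT.preimage hf).rep (h : H ⧸ K)) := by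
    rw [QuotientGroup.eq, ← map_inv, ← map_mul]
    exact Subgroup.mem_map_of_mem f (QuotientGroup.eq.1 ((hT.preimage hf).mk_rep h).symm)
  rw [hmk]
  exact hT.rep_mk ((hT.preimage hf).rep_mem h)

theorem eq_of_preimage_eq (hf : Function.Injective f)
    (hS : IsDoubleTransversal (K.map f) (L.map f) S)
    (hT : IsDoubleTransversal (K.map f) (L.map f) T) (hpre : f ⁻¹' S = f ⁻¹' T)
    (hrep : ∀ q ∉ Set.range fun h : H => (f h : G ⧸ K.map f), hS.rep q = hT.rep q) : S = T := by
  refine hS.eq_of_rep_eq hT fun q => ?_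
  by_cases hq : q ∈ Set.range fun h : H => (f h : G ⧸ K.map f)
  · obtain ⟨h, rfl⟩ := hq
    simp only [rep_map hf, hpre]
  · exact hrep q hq

end Preimage

section Image

variable {f : G →* X} {K L : Subgroup X} {S T : Set G}

theorem image (hf : Function.Surjective f)
    (hT : IsDoubleTransversal (K.comap f) (L.comap f) T) : IsDoubleTransversal K L (f '' T) := by
  constructor
  · refine hf.forall.2 fun g => ?_
    obtain ⟨t, ⟨htT, htK⟩, huniq⟩ := hT.1 g
    refine ⟨f t, ⟨⟨t, htT, rfl⟩, by simpa using htK⟩, ?_⟩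
    rintro _ ⟨⟨s, hsT, rfl⟩, hsK⟩
    rw [huniq s ⟨hsT, by simpa using hsK⟩]
  · refine hf.forall.2 fun g => ?_
    obtain ⟨t, ⟨htT, htL⟩, huniq⟩ := hT.2 g
    refine ⟨f t, ⟨⟨t, htT, rfl⟩, by simpa using htL⟩, ?_⟩
    rintro _ ⟨⟨s, hsT, rfl⟩, hsL⟩
    rw [huniq s ⟨hsT, by simpa using hsL⟩]

theorem rep_image (hf : Function.Surjective f)
    (hT : IsDoubleTransversal (K.comap f) (L.comap f) T) (g : G) :
    (hT.image hf).rep (f g : X ⧸ K) = f (hT.rep (g : G ⧸ K.comap f)) := by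
  have hmk : (f g : X ⧸ K) = f (hT.rep (g : G ⧸ K.comap f)) := by
    rw [QuotientGroup.eq, ← map_inv, ← map_mul]
    exact QuotientGroup.eq.1 (hT.mk_rep g).symm
  rw [hmk]
  exact (hT.image hf).rep_mk (Set.mem_image_of_mem f (hT.rep_mem g))

theorem map_rep_eq_of_image_eq (hf : Function.Surjective f)
    (hS : IsDoubleTransversal (K.comap f) (L.comap f) S)
    (hT : IsDoubleTransversal (K.comap f) (L.comap f) T) (himg : f '' S = f '' T)
    (q : G ⧸ K.comap f) : f (hS.rep q) = f (hT.rep q) := by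
  induction q using QuotientGroup.induction_on with
  | H g => simp only [← rep_image hf, himg]

end Image

end IsDoubleTransversal

section Injective

variable {G H : Type*} [Group G] [Group H] {f : H →* G}

theorem ncard_range_mk_comp (hf : Function.Injective f) (K : Subgroup H) :
    (Set.range fun h : H => (f h : G ⧸ K.map f)).ncard = K.index := by
  have hker : Setoid.ker (fun h : H => (f h : G ⧸ K.map f)) = QuotientGroup.leftRel K := by
    ext a b
    rw [Setoid.ker_def, QuotientGroup.eq, QuotientGroup.leftRel_apply, ← map_inv, ← map_mul,
      Subgroup.mem_map_iff_mem hf]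
  rw [← Nat.card_coe_set_eq, ← Nat.card_congr (Setoid.quotientKerEquivRange _), hker]
  rfl

variable [Finite G]

theorem index_add_ncard_compl_range_mk_comp (hf : Function.Injective f) (K : Subgroup H) :
    K.index + (Set.range fun h : H => (f h : G ⧸ K.map f))ᶜ.ncard = (K.map f).index := by
  rw [← ncard_range_mk_comp hf K, Set.ncard_add_ncard_compl]
  rfl

theorem numDT_map_le (hf : Function.Injective f) (K L : Subgroup H) :
    numDT (K.map f) (L.map f) ≤
      numDT K L * Nat.card K ^ (Set.range fun h : H => (f h : G ⧸ K.map f))ᶜ.ncard := by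
  have : Finite H := Finite.of_injective f hf
  let C := (Set.range fun h : H => (f h : G ⧸ K.map f))ᶜ
  let F : {T // IsDoubleTransversal (K.map f) (L.map f) T} →
      {T // IsDoubleTransversal K L T} × (C → K.map f) :=
    fun T => (⟨f ⁻¹' T, T.2.preimage hf⟩, fun q => ⟨_, T.2.inv_out_mul_rep_mem q⟩)
  have hF : Function.Injective F := by
    intro S T hST
    obtain ⟨hpre, hrep⟩ := Prod.ext_iff.1 hST
    refine Subtype.ext (S.2.eq_of_preimage_eq hf T.2 (congrArg Subtype.val hpre) fun q hq => ?_)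
    exact mul_left_cancel (congrArg Subtype.val (congrFun hrep ⟨q, hq⟩))
  have hle := Nat.card_le_card_of_injective F hF
  rwa [Nat.card_prod, Nat.card_fun, Nat.card_coe_set_eq, Subgroup.card_map_of_injective hf] at hle

theorem transProb_map_le (hf : Function.Injective f) (K L : Subgroup H) :
    transProb (K.map f) (L.map f) ≤ transProb K L := by
  have : Finite H := Finite.of_injective f hf
  have hK : (Nat.card K : ℚ) ≠ 0 := Nat.cast_ne_zero.2 Nat.card_pos.ne'
  set c := (Set.range fun h : H => (f h : G ⧸ K.map f))ᶜ.ncard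
  calc
    transProb (K.map f) (L.map f)
        = numDT (K.map f) (L.map f) / ((Nat.card K : ℚ) ^ K.index * (Nat.card K : ℚ) ^ c) := by
      rw [transProb, Subgroup.card_map_of_injective hf,
        ← index_add_ncard_compl_range_mk_comp hf K, pow_add]
    _ ≤ numDT K L * (Nat.card K : ℚ) ^ c / ((Nat.card K : ℚ) ^ K.index * (Nat.card K : ℚ) ^ c) := by
      gcongr
      exact_mod_cast numDT_map_le hf K L
    _ = transProb K L := mul_div_mul_right _ _ (pow_ne_zero _ hK)

end Injective

section Surjective

variable {G X : Type*} [Group G] [Group X] {f : G →* X}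

theorem card_comap_of_surjective (hf : Function.Surjective f) (K : Subgroup X) :
    Nat.card (K.comap f) = Nat.card K * Nat.card f.ker := by
  have hker : f.ker.relIndex (K.comap f) = Nat.card K := by
    rw [Subgroup.relIndex_ker, Subgroup.map_comap_eq_self_of_surjective hf]
  rw [← Subgroup.relIndex_bot_left, ← hker, ← Subgroup.relIndex_bot_left, mul_comm,
    Subgroup.relIndex_mul_relIndex _ _ _ bot_le (f.ker_le_comap K)]

variable [Finite G]

theorem numDT_comap_le (hf : Function.Surjective f) (K L : Subgroup X) :
    numDT (K.comap f) (L.comap f) ≤ numDT K L * Nat.card f.ker ^ K.index := by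
  have : Finite X := Finite.of_surjective f hf
  let σ := Function.surjInv hf
  have hσ (g : G) : (σ (f g))⁻¹ * g ∈ f.ker := by
    rw [MonoidHom.mem_ker, map_mul, map_inv, Function.surjInv_eq hf, inv_mul_cancel]
  let F : {T // IsDoubleTransversal (K.comap f) (L.comap f) T} →
      {T // IsDoubleTransversal K L T} × (G ⧸ K.comap f → f.ker) :=
    fun T => (⟨f '' T, T.2.image hf⟩, fun q => ⟨_, hσ (T.2.rep q)⟩)
  have hF : Function.Injective F := by
    intro S T hST
    obtain ⟨himg, hrep⟩ := Prod.ext_iff.1 hST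
    refine Subtype.ext (S.2.eq_of_rep_eq T.2 fun q => ?_)
    have hmod := S.2.map_rep_eq_of_image_eq hf T.2 (congrArg Subtype.val himg) q
    have hcoord : (σ (f (S.2.rep q)))⁻¹ * S.2.rep q = (σ (f (T.2.rep q)))⁻¹ * T.2.rep q :=
      congrArg Subtype.val (congrFun hrep q)
    rw [hmod] at hcoord
    exact mul_left_cancel hcoord
  have hle := Nat.card_le_card_of_injective F hF
  rwa [Nat.card_prod, Nat.card_fun, ← Subgroup.index, K.index_comap_of_surjective hf] at hle

theorem transProb_comap_le (hf : Function.Surjective f) (K L : Subgroup X) :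
    transProb (K.comap f) (L.comap f) ≤ transProb K L := by
  have hker : (Nat.card f.ker : ℚ) ≠ 0 := Nat.cast_ne_zero.2 Nat.card_pos.ne'
  set n := Nat.card f.ker
  calc
    transProb (K.comap f) (L.comap f)
        = numDT (K.comap f) (L.comap f) / ((Nat.card K : ℚ) ^ K.index * (n : ℚ) ^ K.index) := by
      rw [transProb, card_comap_of_surjective hf, K.index_comap_of_surjective hf, Nat.cast_mul,
        mul_pow]
    _ ≤ numDT K L * (n : ℚ) ^ K.index / ((Nat.card K : ℚ) ^ K.index * (n : ℚ) ^ K.index) := by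
      gcongr
      exact_mod_cast numDT_comap_le hf K L
    _ = transProb K L := mul_div_mul_right _ _ (pow_ne_zero _ hker)

end Surjective

section Tp

variable {G H X : Type*} [Group G] [Finite G] [Group H] [Group X]

theorem le_tp_iff {a : ℚ} : a ≤ tp G ↔ ∀ K : Subgroup G, a ≤ transProb K K := by
  simp only [tp, Finset.le_inf'_iff, Finset.mem_univ, forall_const]

theorem tp_le_transProb (K : Subgroup G) : tp G ≤ transProb K K :=
  le_tp_iff.1 le_rfl K

theorem tp_le_of_injective [Finite H] {f : H →* G} (hf : Function.Injective f) : tp G ≤ tp H :=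
  le_tp_iff.2 fun K => (tp_le_transProb (K.map f)).trans (transProb_map_le hf K K)

theorem tp_le_of_surjective [Finite X] {f : G →* X} (hf : Function.Surjective f) : tp G ≤ tp X :=
  le_tp_iff.2 fun K => (tp_le_transProb (K.comap f)).trans (transProb_comap_le hf K K)

end Tp

theorem stmt12 (G : Type*) [Group G] [Finite G] :
    (∀ H : Subgroup G, tp G ≤ tp H) ∧
    (∀ (N : Subgroup G) [N.Normal], tp G ≤ tp (G ⧸ N)) ∧
    (∀ (H : Subgroup G) (N : Subgroup H) [N.Normal], tp G ≤ tp (H ⧸ N)) :=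
  ⟨fun H => tp_le_of_injective H.subtype_injective,
    fun N _ => tp_le_of_surjective (QuotientGroup.mk'_surjective N),
    fun H N _ => (tp_le_of_injective H.subtype_injective).trans
      (tp_le_of_surjective (QuotientGroup.mk'_surjective N))⟩
end
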